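/- Let C > 0 and l > 0 be real numbers, let i ≥ 1 be a natural number, let idSl_1, …, idSl_{i−1} be nonnegative reals with Σ_{j=1}^{i−1} idSl_j < C, and let idSl_i > 0. Let F be a nonempty finite set of flows, where each flow f has burst b_f > 0 and rate ρ_f > 0, and assume idSl_i ≥ Σ_{f∈F} ρ_f. Define the aggregate arrival curve α(t) = (Σ_{f∈F} ρ_f)·t + Σ_{f∈F} b_f and the service curve β(t) = idSl_i·max(t − T, 0) with latency T = (Σ_{j=1}^{i−1} (idSl_j − C)·(l/C) − l)/(Σ_{j=1}^{i−1} idSl_j − C). Then the horizontal deviation sup_{t ≥ 0} inf { d ≥ 0 : α(t) ≤ β(t + d) } equals (Σ_{f∈F} b_f)/idSl_i + l/C + (i−1)·l/(C − Σ_{j=1}^{i−1} idSl_j). -/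

import Mathlib

/-!
The latency of the credit-based shaper is `T = l / C + n * l / (C - S)`, where `n` is the number of
higher-priority classes and `S` the sum of their idle slopes. A rate-latency curve of rate `R` has
served an amount `y > 0` of data exactly from time `y / R + T` on, so the delay at time `0` is
`α 0 / R + T`. If `α t ≤ α 0 + R * t`, then data arriving at time `t` is served by
`(α 0 + R * t) / R + T = t + (α 0 / R + T)`, so no later delay is larger.
-/

noncomputable section

/-- The delay seen at time `t`: the infimum of the shifts `d ≥ 0` after which the service curve `β`
has caught up with the arrival curve `α`. If `β` never catches up, the value is `sInf ∅ = 0`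
rather than `∞`. -/
def virtualDelay (α β : ℝ → ℝ) (t : ℝ) : ℝ :=
  sInf {d : ℝ | 0 ≤ d ∧ α t ≤ β (t + d)}

/-- The horizontal deviation of network calculus, i.e. the worst virtual delay over all times
`t ≥ 0`. If the delays are unbounded, the value is the junk value `0` of the real `sSup`. -/
def horizontalDeviation (α β : ℝ → ℝ) : ℝ :=
  sSup (virtualDelay α β '' Set.Ici 0)

/-- The token-bucket arrival curve with rate `r` and burst `b`, as an affine function on all of `ℝ`;
only its values at `t ≥ 0` enter the horizontal deviation. -/
def tokenBucket (r b t : ℝ) : ℝ := r * t + b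

/-- The rate-latency service curve with rate `R` and latency `T`. -/
def rateLatency (R T t : ℝ) : ℝ := R * max (t - T) 0

/-- The latency of the credit-based shaper at a link of rate `C` with maximum frame size `l`, where
`s` is the set of classes of higher priority and `idSl` gives their idle slopes. -/
def cbsLatency {κ : Type*} (s : Finset κ) (idSl : κ → ℝ) (C l : ℝ) : ℝ :=
  ((∑ j ∈ s, (idSl j - C) * (l / C)) - l) / ((∑ j ∈ s, idSl j) - C)

end

section Delay

variable {α β : ℝ → ℝ} {R T t : ℝ}

theorem virtualDelay_le {d : ℝ} (hd : 0 ≤ d) (h : α t ≤ β (t + d)) : virtualDelay α β t ≤ d :=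
  csInf_le ⟨0, fun _ he => he.1⟩ ⟨hd, h⟩

theorem le_rateLatency_iff {y : ℝ} (hR : 0 < R) (hy : 0 < y) :
    y ≤ rateLatency R T t ↔ y / R + T ≤ t := by
  have hyR : ¬ y / R ≤ 0 := (div_pos hy hR).not_ge
  rw [rateLatency, ← div_le_iff₀' hR, le_max_iff, or_iff_left hyR, le_sub_iff_add_le]

theorem virtualDelay_rateLatency (hR : 0 < R) (hα : 0 < α t) :
    virtualDelay α (rateLatency R T) t = max 0 (α t / R + T - t) := by
  have delays_eq : {d : ℝ | 0 ≤ d ∧ α t ≤ rateLatency R T (t + d)} =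
      Set.Ici (max 0 (α t / R + T - t)) := by
    ext d
    rw [Set.mem_ofPred_eq, le_rateLatency_iff hR hα, Set.mem_Ici, max_le_iff, sub_le_iff_le_add']
  rw [virtualDelay, delays_eq, csInf_Ici]

theorem isGreatest_virtualDelay_rateLatency (hR : 0 < R) (hT : 0 ≤ T) (hα₀ : 0 < α 0)
    (hα : ∀ t, 0 ≤ t → α t ≤ α 0 + R * t) :
    IsGreatest (virtualDelay α (rateLatency R T) '' Set.Ici 0) (α 0 / R + T) := by
  have hd : 0 ≤ α 0 / R + T := by positivity
  refine ⟨⟨0, Set.self_mem_Ici, ?_⟩, ?_⟩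
  · rw [virtualDelay_rateLatency hR hα₀, sub_zero, max_eq_right hd]
  · rintro _ ⟨t, ht : 0 ≤ t, rfl⟩
    have hy : 0 < α 0 + R * t := by positivity
    have served : (α 0 + R * t) / R + T = t + (α 0 / R + T) := by field
    exact virtualDelay_le hd ((hα t ht).trans ((le_rateLatency_iff hR hy).2 served.le))

theorem horizontalDeviation_rateLatency (hR : 0 < R) (hT : 0 ≤ T) (hα₀ : 0 < α 0)
    (hα : ∀ t, 0 ≤ t → α t ≤ α 0 + R * t) :
    horizontalDeviation α (rateLatency R T) = α 0 / R + T :=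
  (isGreatest_virtualDelay_rateLatency hR hT hα₀ hα).csSup_eq

theorem horizontalDeviation_tokenBucket_rateLatency {r b : ℝ} (hR : 0 < R) (hT : 0 ≤ T)
    (hb : 0 < b) (hr : r ≤ R) :
    horizontalDeviation (tokenBucket r b) (rateLatency R T) = b / R + T := by
  have burst : tokenBucket r b 0 = b := by rw [tokenBucket, mul_zero, zero_add]
  have growth (t : ℝ) (ht : 0 ≤ t) : tokenBucket r b t ≤ tokenBucket r b 0 + R * t := by
    rw [burst, tokenBucket, add_comm]
    gcongr
  rw [horizontalDeviation_rateLatency hR hT (hb.trans_eq burst.symm) growth, burst]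

end Delay

section Latency

variable {κ : Type*} {s : Finset κ} {idSl : κ → ℝ} {C l : ℝ}

theorem cbsLatency_eq (hC : C ≠ 0) (hs : ∑ j ∈ s, idSl j ≠ C) :
    cbsLatency s idSl C l = l / C + s.card * l / (C - ∑ j ∈ s, idSl j) := by
  rw [cbsLatency, ← Finset.sum_mul, Finset.sum_sub_distrib, Finset.sum_const, nsmul_eq_mul]
  have hSC : ∑ j ∈ s, idSl j - C ≠ 0 := sub_ne_zero.2 hs
  have hCS : C - ∑ j ∈ s, idSl j ≠ 0 := sub_ne_zero.2 hs.symm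
  field

theorem cbsLatency_nonneg (hC : 0 < C) (hl : 0 ≤ l) (hs : ∑ j ∈ s, idSl j < C) :
    0 ≤ cbsLatency s idSl C l := by
  have : 0 < C - ∑ j ∈ s, idSl j := sub_pos.2 hs
  rw [cbsLatency_eq hC.ne' hs.ne]
  positivity

end Latency

/-- Worst-case delay bound for AVB class `i` at a TSN/ATS+CBS egress port:
the horizontal deviation between the aggregate token-bucket arrival curve and
the CBS rate-latency service curve equals `(Σ b_f)/idSl_i + l/C + (i−1)·l/(C − Σ idSl_j)`. -/
theorem worst_case_delay_bound_TSN_ATS_CBS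
    {ι : Type*} (F : Finset ι) (hF : F.Nonempty)
    (b ρ : ι → ℝ) (hb : ∀ f ∈ F, 0 < b f) (hρ : ∀ f ∈ F, 0 < ρ f)
    (C l : ℝ) (hC : 0 < C) (hl : 0 < l)
    (i : ℕ) (hi : 1 ≤ i) (idSl : ℕ → ℝ)
    (hnn : ∀ j ∈ Finset.Icc 1 (i - 1), 0 ≤ idSl j)
    (hsum : ∑ j ∈ Finset.Icc 1 (i - 1), idSl j < C)
    (hIdi : 0 < idSl i)
    (hstab : ∑ f ∈ F, ρ f ≤ idSl i) :
    sSup ((fun t : ℝ =>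
        sInf {d : ℝ | 0 ≤ d ∧
          (∑ f ∈ F, ρ f) * t + ∑ f ∈ F, b f ≤
            idSl i * max ((t + d) -
              (((∑ j ∈ Finset.Icc 1 (i - 1), (idSl j - C) * (l / C)) - l) /
                ((∑ j ∈ Finset.Icc 1 (i - 1), idSl j) - C))) 0}) ''
      {t : ℝ | 0 ≤ t}) =
      (∑ f ∈ F, b f) / idSl i + l / C +
        ((i : ℝ) - 1) * l / (C - ∑ j ∈ Finset.Icc 1 (i - 1), idSl j) := by
  have latency_nonneg : 0 ≤ cbsLatency (Finset.Icc 1 (i - 1)) idSl C l :=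
    cbsLatency_nonneg hC hl.le hsum
  have burst_pos : 0 < ∑ f ∈ F, b f := Finset.sum_pos hb hF
  calc
    _ = horizontalDeviation (tokenBucket (∑ f ∈ F, ρ f) (∑ f ∈ F, b f))
          (rateLatency (idSl i) (cbsLatency (Finset.Icc 1 (i - 1)) idSl C l)) := rfl
    _ = (∑ f ∈ F, b f) / idSl i + cbsLatency (Finset.Icc 1 (i - 1)) idSl C l :=
        horizontalDeviation_tokenBucket_rateLatency hIdi latency_nonneg burst_pos hstab
    _ = _ := by
        rw [cbsLatency_eq hC.ne' hsum.ne, Nat.card_Icc, Nat.add_sub_cancel, Nat.cast_pred hi,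
          ← add_assoc]
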